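/- Let A₁, A₂ be real 2×2 matrices and let P₀ = ℝ², P₁ = (A₁+iI)ℝ², P₂ = (A₂+iI)ℝ² be totally-real planes in ℂ² (i.e., Pⱼ ∩ iPⱼ = {0} for j = 0,1,2). Assume that each of the pairwise unions P₀ ∪ P₁, P₀ ∪ P₂, P₁ ∪ P₂ is locally polynomially convex at the origin, and that det A₁ = 0, det A₂ ≥ 0, and det[A₁,A₂] > 0. Then P₀ ∪ P₁ ∪ P₂ is locally polynomially convex at the origin. -/

import Mathlib

open Complex ComplexConjugate

/-- The polynomially convex hull of a set `K ⊆ ℂ²`. -/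
def polyHull2 (K : Set (ℂ × ℂ)) : Set (ℂ × ℂ) :=
  { z | ∀ p : MvPolynomial (Fin 2) ℂ,
      ‖MvPolynomial.eval (fun i => if i = 0 then z.1 else z.2) p‖ ≤
        sSup ((fun w : ℂ × ℂ =>
          ‖MvPolynomial.eval (fun i => if i = 0 then w.1 else w.2) p‖) '' K) }

/-- A set `K ⊆ ℂ²` is polynomially convex if it equals its polynomially convex hull. -/
def PolyConvex2 (K : Set (ℂ × ℂ)) : Prop := polyHull2 K = K

/-- The closed Euclidean ball of radius `r` centred at the origin in `ℂ²`. -/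
def eClosedBall (r : ℝ) : Set (ℂ × ℂ) := { z | ‖z.1‖ ^ 2 + ‖z.2‖ ^ 2 ≤ r ^ 2 }

/-- A set is locally polynomially convex at the origin. -/
def LocPolyConvexAt0 (E : Set (ℂ × ℂ)) : Prop :=
  ∃ r > (0 : ℝ), PolyConvex2 (E ∩ eClosedBall r)

/-- The standard real plane `ℝ² = {(x,y) : x, y ∈ ℝ} ⊆ ℂ²`. -/
def plane0 : Set (ℂ × ℂ) := { zw | ∃ x y : ℝ, zw = ((x : ℂ), (y : ℂ)) }

/-- The plane `(A + iI)ℝ² ⊆ ℂ²` for a real `2×2` matrix `A`. -/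
def planeOf (A : Matrix (Fin 2) (Fin 2) ℝ) : Set (ℂ × ℂ) :=
  { zw | ∃ x y : ℝ,
      zw = (((A 0 0 * x + A 0 1 * y : ℝ) : ℂ) + Complex.I * (x : ℂ),
            ((A 1 0 * x + A 1 1 * y : ℝ) : ℂ) + Complex.I * (y : ℂ)) }

/-- A subset `S ⊆ ℂ²` is totally real if `S ∩ iS = {0}`. -/
def TotallyRealSet (S : Set (ℂ × ℂ)) : Prop :=
  S ∩ ((fun v => Complex.I • v) '' S) = {0}

/-!
If `det [A₁, A₂] > 0`, then `[A₁, A₂]` turned by a right angle is a symmetric matrix `S` which,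
after a change of sign, is positive definite, and `S A₁`, `S A₂` are symmetric too. Let
`p z = -(z₀, z₁) S (z₀, z₁)ᵀ`. On `ℝ²` we have `p ≤ 0`; on `(A + iI)ℝ²`, with `A = A₁` or `A₂`, we
have `det (S A) ≥ 0`, so the form `S A` is semidefinite, and `p` avoids `(-∞, 0]` away from the
origin. By homogeneity `p` then avoids a whole sector around the negative axis on these two
planes.

So `p` maps the compact pieces `K₁ ⊆ ℝ²` and `K₂ ⊆ P₁ ∪ P₂` to a ray and to a sector meeting it
only at `0`, as in Kallin's lemma. At a point `x` of the hull of `K₁ ∪ K₂`, choose two rays close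
to the negative axis, symmetric about it and missing `p x`. The corresponding branches `u`, `v` of
`√p` are uniform limits of polynomials on `K₁ ∪ K₂ ∪ {x}`, because
`log (1 + s f) = ∫₀ˢ f / (1 + t f) dt` and `√(1 + s f) / √s → √f`. Since `u + v` vanishes on `K₁`
and `u - v` on `K₂`, the point `x` lies in the hull of one of the pieces when `p x ≠ 0`. When
`p x = 0`, the peak functions `1 / (1 + s √f)` show that `x` lies in the hull of the zero set of
`p` in `K₁ ∪ K₂`, which is contained in `ℝ²`, and compact subsets of `ℝ²` are polynomially convex.
-/

open Filter Topology
open scoped ComplexOrder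

lemma one_add_mul_mem_slitPlane {z : ℂ} (hz : ¬z < 0) {s : ℝ} (hs : 0 ≤ s) :
    1 + s * z ∈ slitPlane := by
  rcases hs.eq_or_lt with rfl | hs
  · simp
  rw [mem_slitPlane_iff]
  by_cases him : z.im = 0
  · have hre : 0 ≤ z.re := by
      by_contra! hre
      exact hz (Complex.lt_def.2 ⟨hre, him⟩)
    left
    simp only [add_re, one_re, re_ofReal_mul]
    positivity
  · right
    simpa using ⟨hs.ne', him⟩

lemma sqrt_pow_two (z : ℂ) : sqrt z ^ 2 = z :=
  cpow_ofNat_inv_pow z 2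

lemma sqrt_re_nonneg (z : ℂ) : 0 ≤ (sqrt z).re := by
  rw [sqrt, cpow_inv_two_re]
  positivity

lemma sqrt_eq_exp_log {z : ℂ} (hz : z ≠ 0) : sqrt z = exp (log z / 2) := by
  rw [sqrt, cpow_def_of_ne_zero hz, div_eq_mul_inv]

lemma continuousAt_sqrt_of_not_neg {z : ℂ} (hz : ¬z < 0) : ContinuousAt sqrt z := by
  rw [Complex.lt_def, not_and_or, not_lt] at hz
  exact continuousAt_sqrt hz

lemma sqrt_re_pos {z : ℂ} (hz : z ∈ slitPlane) : 0 < (sqrt z).re := by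
  refine (sqrt_re_nonneg z).lt_of_ne fun hre => mem_slitPlane_iff_not_le_zero.1 hz ?_
  rw [← sqrt_pow_two z, Complex.le_def]
  simp [sq, ← hre, mul_self_nonneg]

lemma sq_norm_sub_le_of_sq_sub_sq_eq {u v : ℂ} (hu : 0 < u.re) (hv : 0 ≤ v.re) {d : ℝ}
    (hd : 0 ≤ d) (h : u ^ 2 - v ^ 2 = d) : ‖u - v‖ ^ 2 ≤ d := by
  have him : 0 ≤ u.im * v.im := by
    have := congrArg Complex.im h
    simp only [sq, sub_im, mul_im, ofReal_im] at this
    refine (mul_nonneg_iff_of_pos_left hu).1 ?_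
    calc 0 ≤ v.re * v.im ^ 2 := by positivity
      _ = u.re * (u.im * v.im) := by linear_combination -v.im / 2 * this
  have hle : ‖u - v‖ ≤ ‖u + v‖ := by
    refine le_of_sq_le_sq ?_ (norm_nonneg _)
    rw [← normSq_eq_norm_sq, ← normSq_eq_norm_sq, normSq_apply, normSq_apply]
    simp only [sub_re, sub_im, add_re, add_im]
    nlinarith [mul_nonneg hu.le hv]
  calc ‖u - v‖ ^ 2 = ‖u - v‖ * ‖u - v‖ := sq _
    _ ≤ ‖u + v‖ * ‖u - v‖ := by gcongr
    _ = ‖u ^ 2 - v ^ 2‖ := by rw [← norm_mul, sq_sub_sq]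
    _ = d := by rw [h, norm_real, Real.norm_of_nonneg hd]

/-! ### Logarithms and square roots in closed function algebras -/

section

variable {α : Type*} [TopologicalSpace α] [CompactSpace α] {A : Subalgebra ℂ C(α, ℂ)}

/-- Passing to a closed subalgebra enlarges the spectrum only by bounded components of the resolvent
set. -/
lemma neg_notMem_spectrum (hA : IsClosed (A : Set C(α, ℂ))) {f : A}
    (hf : ∀ x, ¬ (f : C(α, ℂ)) x < 0) {z : ℂ} (hz : z < 0) : z ∉ spectrum ℂ f := by
  intro hmem
  have hbdd := Subalgebra.spectrum_isBounded_connectedComponentIn A f hmem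
  rw [ContinuousMap.spectrum_eq_range] at hbdd
  have hsub : Set.Iio (0 : ℂ) ⊆ connectedComponentIn (Set.range (f : C(α, ℂ)))ᶜ z := by
    refine (convex_Iio (𝕜 := ℝ) (0 : ℂ)).isPreconnected.subset_connectedComponentIn hz ?_
    rintro _ hneg ⟨x, rfl⟩
    exact hf x hneg
  obtain ⟨R, hR⟩ := isBounded_iff_forall_norm_le.1 (hbdd.subset hsub)
  have hlt : ((-(|R| + 1) : ℝ) : ℂ) < 0 := by
    exact_mod_cast neg_neg_of_pos (by positivity)
  have hnorm := hR _ hlt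
  rw [norm_real, Real.norm_eq_abs, abs_neg, abs_of_pos (by positivity)] at hnorm
  linarith [le_abs_self R]

lemma isUnit_one_add_smul (hA : IsClosed (A : Set C(α, ℂ))) {f : A}
    (hf : ∀ x, ¬ (f : C(α, ℂ)) x < 0) {s : ℝ} (hs : 0 ≤ s) : IsUnit (1 + (s : ℂ) • f) := by
  rcases hs.eq_or_lt with rfl | hs
  · rw [ofReal_zero, zero_smul, add_zero]
    exact isUnit_one
  have hneg : ((-s⁻¹ : ℝ) : ℂ) < 0 := by exact_mod_cast neg_neg_of_pos (inv_pos.2 hs)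
  have hunit := spectrum.notMem_iff.1 (neg_notMem_spectrum hA hf hneg)
  rw [Algebra.algebraMap_eq_smul_one] at hunit
  have hunit' := (IsUnit.smul_sub_iff_sub_inv_smul (r := Units.mk0 _ hneg.ne) (a := f)).1 hunit
  have hcoe : (((Units.mk0 _ hneg.ne)⁻¹ : ℂˣ) : ℂ) = -s := by simp
  rwa [Units.smul_def, hcoe, neg_smul, sub_neg_eq_add] at hunit'

lemma inverse_one_add_smul_apply (hA : IsClosed (A : Set C(α, ℂ))) {f : A}
    (hf : ∀ x, ¬ (f : C(α, ℂ)) x < 0) {s : ℝ} (hs : 0 ≤ s) (x : α) :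
    ((Ring.inverse (1 + (s : ℂ) • f) : A) : C(α, ℂ)) x = (1 + s * (f : C(α, ℂ)) x)⁻¹ := by
  have hmul := Ring.inverse_mul_cancel _ (isUnit_one_add_smul hA hf hs)
  have hx := congrArg (fun g : A => (g : C(α, ℂ)) x) hmul
  exact eq_inv_of_mul_eq_one_left hx

lemma exists_mem_eq_log_one_add_mul (hA : IsClosed (A : Set C(α, ℂ))) {f : A}
    (hf : ∀ x, ¬ (f : C(α, ℂ)) x < 0) {s : ℝ} (hs : 0 ≤ s) :
    ∃ l : A, ∀ x, (l : C(α, ℂ)) x = log (1 + s * (f : C(α, ℂ)) x) := by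
  have : CompleteSpace A := hA.completeSpace_coe
  let G : ℝ → A := fun t => f * Ring.inverse (1 + (t : ℂ) • f)
  have hG : ContinuousOn G (Set.uIcc 0 s) := by
    rw [Set.uIcc_of_le hs]
    intro t ht
    have hinv : ContinuousAt Ring.inverse (1 + (t : ℂ) • f) :=
      NormedRing.inverse_continuousAt (isUnit_one_add_smul hA hf ht.1).unit
    have hlin : Continuous fun t : ℝ => 1 + (t : ℂ) • f := by fun_prop
    exact (continuousAt_const.mul (hinv.comp (f := fun t : ℝ => 1 + (t : ℂ) • f)
      hlin.continuousAt)).continuousWithinAt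
  refine ⟨∫ t in (0 : ℝ)..s, G t, fun x => ?_⟩
  let ev : A →L[ℂ] ℂ := (ContinuousMap.evalCLM ℂ x).comp (Subalgebra.toSubmodule A).subtypeL
  have hderiv : ∀ t ∈ Set.uIcc 0 s,
      HasDerivAt (fun t : ℝ => log (1 + t * (f : C(α, ℂ)) x)) (ev (G t)) t := by
    intro t ht
    rw [Set.uIcc_of_le hs] at ht
    have hval : ev (G t) = (f : C(α, ℂ)) x / (1 + t * (f : C(α, ℂ)) x) := by
      rw [div_eq_mul_inv, ← inverse_one_add_smul_apply hA hf ht.1]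
      rfl
    have hlin : HasDerivAt (fun t : ℝ => 1 + (t : ℂ) * (f : C(α, ℂ)) x) ((f : C(α, ℂ)) x) t := by
      simpa using ((ofRealCLM.hasDerivAt (x := t)).mul_const ((f : C(α, ℂ)) x)).const_add 1
    rw [hval]
    exact hlin.clog_real (one_add_mul_mem_slitPlane (hf x) ht.1)
  calc ((∫ t in (0 : ℝ)..s, G t : A) : C(α, ℂ)) x
      = ∫ t in (0 : ℝ)..s, ev (G t) :=
        (ev.intervalIntegral_comp_comm hG.intervalIntegrable).symm
    _ = log (1 + s * (f : C(α, ℂ)) x) := by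
        rw [intervalIntegral.integral_eq_sub_of_hasDerivAt hderiv
          (ev.continuous.comp_continuousOn hG).intervalIntegrable]
        simp

lemma exp_coe_apply (hA : IsClosed (A : Set C(α, ℂ))) (f : A) (x : α) :
    ((NormedSpace.exp f : A) : C(α, ℂ)) x = exp ((f : C(α, ℂ)) x) := by
  have : CompleteSpace A := hA.completeSpace_coe
  let _ : NormedAlgebra ℚ A := NormedAlgebra.restrictScalars ℚ ℂ A
  let ev : A →ₐ[ℂ] ℂ := (ContinuousMap.evalAlgHom ℂ ℂ x).comp A.val
  have hev : Continuous ev := (ContinuousMap.evalCLM ℂ x).continuous.comp continuous_subtype_val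
  rw [exp_eq_exp_ℂ]
  exact NormedSpace.map_exp ev hev f

lemma exists_mem_eq_sqrt_one_add_mul (hA : IsClosed (A : Set C(α, ℂ))) {f : A}
    (hf : ∀ x, ¬ (f : C(α, ℂ)) x < 0) {s : ℝ} (hs : 0 ≤ s) :
    ∃ r : A, ∀ x, (r : C(α, ℂ)) x = sqrt (1 + s * (f : C(α, ℂ)) x) := by
  obtain ⟨l, hl⟩ := exists_mem_eq_log_one_add_mul hA hf hs
  refine ⟨NormedSpace.exp ((2⁻¹ : ℂ) • l), fun x => ?_⟩
  rw [exp_coe_apply hA, sqrt_eq_exp_log (slitPlane_ne_zero (one_add_mul_mem_slitPlane (hf x) hs)),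
    ← hl x, div_eq_inv_mul]
  rfl

/-- `√f` is the uniform limit of `√(1 + s f) / √s` as `s → ∞`. -/
lemma exists_mem_eq_sqrt (hA : IsClosed (A : Set C(α, ℂ))) {f : A}
    (hf : ∀ x, ¬ (f : C(α, ℂ)) x < 0) : ∃ r : A, ∀ x, (r : C(α, ℂ)) x = sqrt ((f : C(α, ℂ)) x) := by
  let r : C(α, ℂ) := ⟨fun x => sqrt ((f : C(α, ℂ)) x), continuous_iff_continuousAt.2 fun x =>
    (continuousAt_sqrt_of_not_neg (hf x)).comp (f : C(α, ℂ)).continuous.continuousAt⟩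
  suffices hr : r ∈ closure (A : Set C(α, ℂ)) from
    ⟨⟨r, hA.closure_subset hr⟩, fun _ => rfl⟩
  refine Metric.mem_closure_iff.2 fun ε hε => ?_
  set δ : ℝ := ε / 2
  have hδ : 0 < δ := half_pos hε
  obtain ⟨q, hq⟩ := exists_mem_eq_sqrt_one_add_mul hA hf (inv_nonneg.2 (sq_nonneg δ))
  refine ⟨((δ : ℂ) • q : A), ((δ : ℂ) • q).2, lt_of_le_of_lt ?_ (half_lt_self hε)⟩
  rw [dist_comm, ContinuousMap.dist_le hδ.le]
  intro x
  have hre : 0 < (δ * (q : C(α, ℂ)) x).re := by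
    rw [re_ofReal_mul, hq]
    exact mul_pos hδ (sqrt_re_pos (one_add_mul_mem_slitPlane (hf x) (inv_nonneg.2 (sq_nonneg δ))))
  have hsq : (δ * (q : C(α, ℂ)) x) ^ 2 - sqrt ((f : C(α, ℂ)) x) ^ 2 = (δ ^ 2 : ℝ) := by
    have : (δ : ℂ) ≠ 0 := ofReal_ne_zero.2 hδ.ne'
    rw [mul_pow, hq, sqrt_pow_two, sqrt_pow_two]
    push_cast
    field_simp
    ring
  rw [dist_eq_norm]
  exact le_of_sq_le_sq
    (sq_norm_sub_le_of_sq_sub_sq_eq hre (sqrt_re_nonneg _) (sq_nonneg δ) hsq) hδ.le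

/-! ### Hulls with respect to a function algebra -/

/-- The hull of `L` with respect to an algebra `A` of functions: the points at which every member
of `A` satisfies the bounds it satisfies on `L`. Asking for bounds `M` instead of comparing with a
supremum avoids the junk values of `sSup`. -/
def algebraHull (A : Subalgebra ℂ C(α, ℂ)) (L : Set α) : Set α :=
  {x | ∀ a ∈ A, ∀ M : ℝ, 0 ≤ M → (∀ y ∈ L, ‖a y‖ ≤ M) → ‖a x‖ ≤ M}

lemma le_of_forall_mul_pow_le {a c C M : ℝ} (hM : 0 ≤ M) (hc : 0 < c)
    (h : ∀ n : ℕ, c * a ^ n ≤ C * M ^ n) : a ≤ M := by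
  by_contra! hlt
  have ha : 0 < a := hM.trans_lt hlt
  have hlim : Tendsto (fun n : ℕ => C * (M / a) ^ n) atTop (𝓝 (C * 0)) :=
    (tendsto_pow_atTop_nhds_zero_of_lt_one (by positivity) ((div_lt_one ha).2 hlt)).const_mul _
  have hle : c ≤ C * 0 := ge_of_tendsto' hlim fun n => by
    rw [div_pow, mul_div_assoc', le_div_iff₀ (by positivity)]
    exact h n
  linarith

lemma mem_algebraHull_of_union {S T : Set α} {x : α} (hx : x ∈ algebraHull A (S ∪ T))
    {h : C(α, ℂ)} (hhA : h ∈ A) (hhT : ∀ y ∈ T, h y = 0) (hhx : h x ≠ 0) :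
    x ∈ algebraHull A S := by
  intro a ha M hM0 hM
  refine le_of_forall_mul_pow_le (C := ‖h‖) hM0 (norm_pos_iff.2 hhx) fun n => ?_
  rw [← norm_pow, ← norm_mul]
  refine hx (h * a ^ n) (mul_mem hhA (pow_mem ha n)) _ (by positivity) ?_
  rintro y (hy | hy)
  · rw [ContinuousMap.mul_apply, ContinuousMap.pow_apply, norm_mul, norm_pow]
    gcongr
    exacts [h.norm_coe_le_norm y, hM y hy]
  · rw [ContinuousMap.mul_apply, hhT y hy, zero_mul, norm_zero]
    positivity

lemma le_norm_one_add_mul_of_re_nonneg {w : ℂ} (hw : 0 ≤ w.re) {s : ℝ} (hs : 0 ≤ s) :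
    1 ≤ ‖1 + s * w‖ ∧ s * ‖w‖ ≤ ‖1 + s * w‖ := by
  have hsw : 0 ≤ s * w.re := mul_nonneg hs hw
  constructor
  · refine le_trans ?_ (re_le_norm _)
    simpa using hsw
  · rw [← Real.norm_of_nonneg hs, ← norm_real, ← norm_mul]
    refine le_of_sq_le_sq ?_ (norm_nonneg _)
    rw [← normSq_eq_norm_sq, ← normSq_eq_norm_sq, normSq_apply, normSq_apply]
    simp only [add_re, one_re, add_im, one_im, zero_add, re_ofReal_mul, im_ofReal_mul, norm_real,
      Real.norm_of_nonneg hs]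
    nlinarith

/-- For large `s` the function `1 / (1 + s f)` peaks on the zero set of `f`. -/
lemma mem_algebraHull_inter_zero_of_re_nonneg (hA : IsClosed (A : Set C(α, ℂ))) {f : A}
    (hf : ∀ x, 0 ≤ ((f : C(α, ℂ)) x).re) {L : Set α} (hL : IsClosed L) {x : α}
    (hx : x ∈ algebraHull A L) (hfx : (f : C(α, ℂ)) x = 0) :
    x ∈ algebraHull A (L ∩ {y | (f : C(α, ℂ)) y = 0}) := by
  intro a ha M hM0 hM
  have hf_neg : ∀ y, ¬ (f : C(α, ℂ)) y < 0 := fun y hneg =>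
    (hf y).not_gt (Complex.lt_def.1 hneg).1
  refine le_of_forall_gt_imp_ge_of_dense fun M' hMM' => ?_
  have hM' : 0 < M' := hM0.trans_lt hMM'
  have hK : IsCompact (L ∩ {y | M' ≤ ‖a y‖}) :=
    (hL.inter (isClosed_le continuous_const a.continuous.norm)).isCompact
  obtain ⟨c, hc, hcK⟩ : ∃ c > 0, ∀ y ∈ L ∩ {y | M' ≤ ‖a y‖}, c ≤ ‖(f : C(α, ℂ)) y‖ :=
    hK.exists_forall_le' (f : C(α, ℂ)).continuous.norm.continuousOn fun y hy =>
      norm_pos_iff.2 fun hfy => (hM y ⟨hy.1, hfy⟩).not_gt (hMM'.trans_le hy.2)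
  set s : ℝ := ‖a‖ / (c * M') with hs
  have hs0 : 0 ≤ s := by positivity
  let b : A := ⟨a, ha⟩ * Ring.inverse (1 + (s : ℂ) • f)
  have hb : ∀ y, (b : C(α, ℂ)) y = a y / (1 + s * (f : C(α, ℂ)) y) := fun y => by
    rw [div_eq_mul_inv, ← inverse_one_add_smul_apply hA hf_neg hs0]
    rfl
  have hbx : (b : C(α, ℂ)) x = a x := by rw [hb, hfx, mul_zero, add_zero, div_one]
  rw [← hbx]
  refine hx b b.2 M' hM'.le fun y hy => ?_
  obtain ⟨hone, hsf⟩ := le_norm_one_add_mul_of_re_nonneg (hf y) hs0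
  rw [hb, norm_div, div_le_iff₀ (one_pos.trans_le hone)]
  rcases le_total ‖a y‖ M' with hay | hay
  · exact hay.trans (le_mul_of_one_le_right hM'.le hone)
  · calc ‖a y‖ ≤ ‖a‖ := a.norm_coe_le_norm y
      _ = M' * (s * c) := by rw [hs]; field_simp
      _ ≤ M' * ‖1 + s * (f : C(α, ℂ)) y‖ := by
        gcongr
        exact (mul_le_mul_of_nonneg_left (hcK y ⟨hy, hay⟩) hs0).trans hsf

lemma mem_algebraHull_inter_zero (hA : IsClosed (A : Set C(α, ℂ))) {f : A}
    (hf : ∀ x, ¬ (f : C(α, ℂ)) x < 0) {L : Set α} (hL : IsClosed L) {x : α}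
    (hx : x ∈ algebraHull A L) (hfx : (f : C(α, ℂ)) x = 0) :
    x ∈ algebraHull A (L ∩ {y | (f : C(α, ℂ)) y = 0}) := by
  obtain ⟨r, hr⟩ := exists_mem_eq_sqrt hA hf
  have hr_zero : ∀ y, (r : C(α, ℂ)) y = 0 ↔ (f : C(α, ℂ)) y = 0 := fun y => by
    rw [hr, ← sq_eq_zero_iff, sqrt_pow_two]
  simp only [← hr_zero] at hfx ⊢
  exact mem_algebraHull_inter_zero_of_re_nonneg hA (fun y => hr y ▸ sqrt_re_nonneg _) hL hx hfx

end

/-- The branch of the square root with its cut along the ray `arg w = π - η`. -/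
noncomputable def rotSqrt (η : ℝ) (w : ℂ) : ℂ :=
  exp (-(η / 2 : ℝ) * I) * sqrt (exp (η * I) * w)

lemma rotSqrt_pow_two (η : ℝ) (w : ℂ) : rotSqrt η w ^ 2 = w := by
  rw [rotSqrt, mul_pow, sqrt_pow_two, ← exp_nat_mul, ← mul_assoc, ← exp_add]
  have : ((2 : ℕ) : ℂ) * (-(η / 2 : ℝ) * I) + η * I = 0 := by
    push_cast
    ring
  rw [this, exp_zero, one_mul]

lemma rotSqrt_eq_sqrt {η : ℝ} {w : ℂ} (hw : |arg w| < Real.pi - |η|) : rotSqrt η w = sqrt w := by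
  rcases eq_or_ne w 0 with rfl | hw0
  · simp [rotSqrt]
  have hη : η ∈ Set.Ioc (-Real.pi) Real.pi := by
    have := abs_nonneg (arg w)
    have := abs_lt.1 (show |η| < Real.pi by linarith)
    exact ⟨this.1, this.2.le⟩
  have harg : arg (exp (η * I)) = η := by
    rw [arg_exp_mul_I]
    exact (toIocMod_eq_self _).2 ⟨hη.1, by linarith [hη.2]⟩
  have hadd : arg (exp (η * I)) + arg w ∈ Set.Ioc (-Real.pi) Real.pi := by
    have h := abs_lt.1 ((abs_add_le η (arg w)).trans_lt (by linarith : _ < Real.pi))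
    rw [harg]
    exact ⟨h.1, h.2.le⟩
  have hlog : log (exp (η * I) * w) = η * I + log w := by
    rw [(log_mul_eq_add_log_iff (exp_ne_zero _) hw0).2 hadd, log_exp (by simpa using hη.1)
      (by simpa using hη.2)]
  rw [rotSqrt, sqrt_eq_exp_log (mul_ne_zero (exp_ne_zero _) hw0), sqrt_eq_exp_log hw0, hlog,
    ← exp_add]
  congr 1
  push_cast
  ring

lemma abs_arg_of_exp_mul_I_mul_neg {η : ℝ} (hη : |η| < Real.pi) {w : ℂ}
    (hw : exp (η * I) * w < 0) : |arg w| = Real.pi - |η| := by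
  obtain ⟨t, ht, hwt⟩ : ∃ t : ℝ, 0 < t ∧ w = t * (-exp (-(η * I))) := by
    refine ⟨-(exp (η * I) * w).re, neg_pos.2 (Complex.lt_def.1 hw).1, ?_⟩
    have hre : (((exp (η * I) * w).re : ℝ) : ℂ) = exp (η * I) * w :=
      Complex.ext rfl (Complex.lt_def.1 hw).2.symm
    rw [ofReal_neg, hre, neg_mul_neg, mul_right_comm, ← exp_add, add_neg_cancel, exp_zero, one_mul]
  rw [hwt, arg_real_mul _ ht]
  obtain ⟨hη₁, hη₂⟩ := abs_lt.1 hη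
  rcases le_or_gt 0 η with h0 | h0
  · have : -exp (-(η * I)) = exp ((Real.pi - η : ℝ) * I) := by
      rw [ofReal_sub, sub_mul, sub_eq_add_neg, exp_add, exp_pi_mul_I, neg_one_mul]
    rw [this, arg_exp_mul_I, (toIocMod_eq_self _).2 ⟨by linarith, by linarith⟩, abs_of_nonneg h0,
      abs_of_pos (by linarith)]
  · have : -exp (-(η * I)) = exp ((-Real.pi - η : ℝ) * I) := by
      push_cast
      rw [sub_mul, neg_mul, sub_eq_add_neg, exp_add, exp_neg_pi_mul_I, neg_one_mul]
    rw [this, arg_exp_mul_I, (toIocMod_eq_self _).2 ⟨by linarith, by linarith⟩, abs_of_neg h0,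
      abs_of_neg (by linarith)]
    ring

lemma conj_sqrt {z : ℂ} (hz : ¬z < 0) : conj (sqrt z) = sqrt (conj z) := by
  have harg : arg z ≠ Real.pi := fun h => hz (arg_eq_pi_iff_lt_zero.1 h)
  rw [sqrt, sqrt, conj_cpow _ _ harg, map_inv₀, conj_ofNat]

lemma rotSqrt_add_rotSqrt_neg {η : ℝ} {w : ℂ} (hw : w ≤ 0) (hη : ¬exp (η * I) * w < 0) :
    rotSqrt η w + rotSqrt (-η) w = 0 := by
  have hw_conj : conj w = w := conj_eq_iff_im.2 (Complex.le_def.1 hw).2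
  have hconj : rotSqrt (-η) w = conj (rotSqrt η w) := by
    rw [rotSqrt, rotSqrt, map_mul, conj_sqrt hη, map_mul, hw_conj, ← exp_conj, ← exp_conj]
    simp only [map_mul, map_neg, conj_I, conj_ofReal, neg_div, ofReal_neg, neg_mul, mul_neg]
  have hsq : (rotSqrt η w ^ 2).re ≤ 0 ∧ (rotSqrt η w ^ 2).im = 0 := by
    rw [rotSqrt_pow_two]
    exact Complex.le_def.1 hw
  have hre : (rotSqrt η w).re = 0 := by
    simp only [sq, mul_re, mul_im] at hsq
    have : (rotSqrt η w).re * (rotSqrt η w).im = 0 := by linarith [hsq.2]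
    rcases mul_eq_zero.1 this with h | h
    · exact h
    · nlinarith [hsq.1]
  rw [hconj, add_conj, hre]
  simp

section

variable {α : Type*} [TopologicalSpace α] [CompactSpace α] {A : Subalgebra ℂ C(α, ℂ)}

lemma exists_mem_eq_rotSqrt (hA : IsClosed (A : Set C(α, ℂ))) {f : A} {η : ℝ}
    (hf : ∀ x, ¬exp (η * I) * (f : C(α, ℂ)) x < 0) :
    ∃ r : A, ∀ x, (r : C(α, ℂ)) x = rotSqrt η ((f : C(α, ℂ)) x) := by
  obtain ⟨r, hr⟩ := exists_mem_eq_sqrt hA (f := exp (η * I) • f) hf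
  refine ⟨exp (-(η / 2 : ℝ) * I) • r, fun x => ?_⟩
  rw [rotSqrt, ← smul_eq_mul (exp (η * I))]
  exact congrArg (exp (-(η / 2 : ℝ) * I) * ·) (hr x)

lemma mem_algebraHull_or_of_add_sub_eq_zero {S T : Set α} {x : α} (hx : x ∈ algebraHull A (S ∪ T))
    {u v : C(α, ℂ)} (hu : u ∈ A) (hv : v ∈ A) (hadd : ∀ y ∈ S, (u + v) y = 0)
    (hsub : ∀ y ∈ T, (u - v) y = 0) (hux : u x ≠ 0) : x ∈ algebraHull A S ∪ algebraHull A T := by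
  by_cases huv : (u - v) x = 0
  · rw [Set.union_comm] at hx
    refine Or.inr (mem_algebraHull_of_union hx (add_mem hu hv) hadd fun huv' => hux ?_)
    rw [ContinuousMap.sub_apply] at huv
    rw [ContinuousMap.add_apply] at huv'
    linear_combination (huv + huv') / 2
  · exact Or.inl (mem_algebraHull_of_union hx (sub_mem hu hv) hsub huv)

lemma algebraHull_union_subset (hA : IsClosed (A : Set C(α, ℂ))) {f : A} {S T : Set α}
    (hST : IsClosed (S ∪ T)) {η : ℝ} (hη₀ : 0 < η) (hηπ : η < Real.pi)
    (hf : ∀ x, |arg ((f : C(α, ℂ)) x)| ≠ Real.pi - η) (hS : ∀ x ∈ S, (f : C(α, ℂ)) x ≤ 0)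
    (hT : ∀ x ∈ T, |arg ((f : C(α, ℂ)) x)| < Real.pi - η) :
    algebraHull A (S ∪ T) ⊆ algebraHull A S ∪ algebraHull A T ∪
      algebraHull A ((S ∪ T) ∩ {x | (f : C(α, ℂ)) x = 0}) := by
  have habs : |η| = η := abs_of_pos hη₀
  have hpos : ∀ x, ¬exp (η * I) * (f : C(α, ℂ)) x < 0 := fun x hlt => hf x <| by
    rw [abs_arg_of_exp_mul_I_mul_neg (habs.trans_lt hηπ) hlt, habs]
  have hneg : ∀ x, ¬exp ((-η : ℝ) * I) * (f : C(α, ℂ)) x < 0 := fun x hlt => hf x <| by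
    rw [abs_arg_of_exp_mul_I_mul_neg (by rwa [abs_neg, habs]) hlt, abs_neg, habs]
  intro x hx
  by_cases hfx : (f : C(α, ℂ)) x = 0
  · right
    have hzero : ∀ y, exp (η * I) * (f : C(α, ℂ)) y = 0 ↔ (f : C(α, ℂ)) y = 0 := fun y =>
      mul_eq_zero_iff_left (exp_ne_zero _)
    have hmem := mem_algebraHull_inter_zero hA (f := exp (η * I) • f) hpos hST hx ((hzero x).2 hfx)
    simpa [hzero] using hmem
  left
  obtain ⟨u, hu⟩ := exists_mem_eq_rotSqrt hA hpos
  obtain ⟨v, hv⟩ := exists_mem_eq_rotSqrt hA hneg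
  have hsub : ∀ y ∈ T, (u - v : C(α, ℂ)) y = 0 := fun y hy => by
    rw [ContinuousMap.sub_apply, hu, hv, rotSqrt_eq_sqrt, rotSqrt_eq_sqrt, sub_self]
    · rw [abs_neg, habs]
      exact hT y hy
    · rw [habs]
      exact hT y hy
  have hadd : ∀ y ∈ S, (u + v : C(α, ℂ)) y = 0 := fun y hy => by
    rw [ContinuousMap.add_apply, hu, hv, rotSqrt_add_rotSqrt_neg (hS y hy) (hpos y)]
  refine mem_algebraHull_or_of_add_sub_eq_zero hx u.2 v.2 hadd hsub fun hux => hfx ?_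
  rw [← rotSqrt_pow_two η ((f : C(α, ℂ)) x), ← hu, hux, zero_pow two_ne_zero]

lemma algebraHull_topologicalClosure (A : Subalgebra ℂ C(α, ℂ)) (L : Set α) :
    algebraHull A.topologicalClosure L = algebraHull A L := by
  refine Set.Subset.antisymm (fun x hx a ha => hx a (A.le_topologicalClosure ha)) ?_
  intro x hx a ha M hM0 hM
  refine le_of_forall_pos_le_add fun ε hε => ?_
  obtain ⟨b, hb, hab⟩ := Metric.mem_closure_iff.1 ha (ε / 2) (half_pos hε)
  have hclose : ∀ y, ‖a y - b y‖ ≤ ε / 2 := fun y =>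
    (dist_eq_norm (a y) (b y) ▸ ContinuousMap.dist_apply_le_dist y).trans hab.le
  have hbx : ‖b x‖ ≤ M + ε / 2 := hx b hb _ (by positivity) fun y hy => by
    linarith [hM y hy, hclose y, norm_le_norm_add_norm_sub (a y) (b y)]
  linarith [hclose x, norm_le_norm_add_norm_sub' (a x) (b x)]

end

/-! ### Polynomially convex hulls in `ℂ²` -/

/-- The coordinates of a point of `ℂ × ℂ`, in the form in which `polyHull2` feeds them to
`MvPolynomial.eval`. -/
def coords (z : ℂ × ℂ) : Fin 2 → ℂ := fun i => if i = 0 then z.1 else z.2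

lemma continuous_coords : Continuous coords :=
  continuous_pi fun i => by
    unfold coords
    split_ifs
    exacts [continuous_fst, continuous_snd]

lemma continuous_comp_coords {g : ℂ → ℝ} (hg : Continuous g) : Continuous fun z => g ∘ coords z :=
  continuous_pi fun i => hg.comp ((continuous_apply i).comp continuous_coords)

lemma continuous_eval_coords (p : MvPolynomial (Fin 2) ℂ) :
    Continuous fun z => MvPolynomial.eval (coords z) p :=
  (MvPolynomial.continuous_eval p).comp continuous_coords

lemma mem_polyHull2_iff {K : Set (ℂ × ℂ)} (hK : IsCompact K) {z : ℂ × ℂ} :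
    z ∈ polyHull2 K ↔ ∀ (p : MvPolynomial (Fin 2) ℂ) (M : ℝ), 0 ≤ M →
      (∀ w ∈ K, ‖MvPolynomial.eval (coords w) p‖ ≤ M) → ‖MvPolynomial.eval (coords z) p‖ ≤ M := by
  refine ⟨fun hz p M hM0 hM => (hz p).trans (Real.sSup_le ?_ hM0), fun hz p => hz p _ ?_ ?_⟩
  · rintro _ ⟨w, hw, rfl⟩
    exact hM w hw
  · refine Real.sSup_nonneg ?_
    rintro _ ⟨w, -, rfl⟩
    exact norm_nonneg _
  · exact fun w hw => le_csSup (hK.image (continuous_eval_coords p).norm).bddAbove ⟨w, hw, rfl⟩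

lemma subset_polyHull2 {K : Set (ℂ × ℂ)} (hK : IsCompact K) : K ⊆ polyHull2 K :=
  fun z hz => (mem_polyHull2_iff hK).2 fun _ _ _ hM => hM z hz

/-- The restriction of a polynomial to `X`. -/
noncomputable def polyRestrict (X : Set (ℂ × ℂ)) : MvPolynomial (Fin 2) ℂ →ₐ[ℂ] C(X, ℂ) :=
  MvPolynomial.aeval fun i =>
    ⟨fun x => coords x i, (continuous_apply i).comp (continuous_coords.comp continuous_subtype_val)⟩

lemma polyRestrict_apply {X : Set (ℂ × ℂ)} (p : MvPolynomial (Fin 2) ℂ) (x : X) :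
    polyRestrict X p x = MvPolynomial.eval (coords x) p := by
  rw [← MvPolynomial.coe_aeval_eq_eval]
  exact MvPolynomial.comp_aeval_apply _ (ContinuousMap.evalAlgHom ℂ ℂ x) p

lemma mem_polyHull2_iff_mem_algebraHull {X L : Set (ℂ × ℂ)} [CompactSpace X] (hL : IsCompact L)
    (hLX : L ⊆ X) (x : X) : (x : ℂ × ℂ) ∈ polyHull2 L ↔
      x ∈ algebraHull (polyRestrict X).range.topologicalClosure (Subtype.val ⁻¹' L) := by
  rw [mem_polyHull2_iff hL, algebraHull_topologicalClosure]
  simp only [algebraHull, Set.mem_ofPred_eq, AlgHom.mem_range, forall_exists_index,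
    forall_apply_eq_imp_iff, polyRestrict_apply, Set.mem_preimage, Subtype.forall]
  exact forall₃_congr fun _ _ _ =>
    ⟨fun h hX => h fun w hw => hX w (hLX hw) hw, fun h hL => h fun w _ hw => hL w hw⟩

lemma exists_lt_abs_arg_ne {ε : ℝ} (hε : 0 < ε) (w : ℂ) :
    ∃ η, 0 < η ∧ η < ε ∧ η < Real.pi ∧ |arg w| ≠ Real.pi - η := by
  obtain ⟨η, ⟨hη0, hη⟩, hne⟩ := (Set.Ioo_infinite (lt_min hε Real.pi_pos)).exists_notMem_finset
    {Real.pi - |arg w|}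
  rw [lt_min_iff] at hη
  refine ⟨η, hη0, hη.1, hη.2, fun h => hne ?_⟩
  rw [Finset.mem_singleton]
  linarith

lemma abs_arg_ne_of_nonpos {w : ℂ} (hw : w ≤ 0) {η : ℝ} (hη₀ : 0 < η) (hηπ : η < Real.pi) :
    |arg w| ≠ Real.pi - η := by
  rcases hw.eq_or_lt with rfl | hw
  · rw [arg_zero, abs_zero]
    exact (sub_pos.2 hηπ).ne
  · rw [arg_eq_pi_iff_lt_zero.2 hw, abs_of_pos Real.pi_pos]
    linarith

lemma polyHull2_union_subset {K₁ K₂ : Set (ℂ × ℂ)} (hK₁ : IsCompact K₁) (hK₂ : IsCompact K₂)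
    (p : MvPolynomial (Fin 2) ℂ) (hp₁ : ∀ z ∈ K₁, MvPolynomial.eval (coords z) p ≤ 0) {ε : ℝ}
    (hε : 0 < ε) (hp₂ : ∀ z ∈ K₂, |arg (MvPolynomial.eval (coords z) p)| ≤ Real.pi - ε) :
    polyHull2 (K₁ ∪ K₂) ⊆ polyHull2 K₁ ∪ polyHull2 K₂ ∪
      polyHull2 ((K₁ ∪ K₂) ∩ {z | MvPolynomial.eval (coords z) p = 0}) := by
  intro x hx
  obtain ⟨η, hη₀, hηε, hηπ, hxη⟩ := exists_lt_abs_arg_ne hε (MvPolynomial.eval (coords x) p)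
  have hK₂η : ∀ z ∈ K₂, |arg (MvPolynomial.eval (coords z) p)| < Real.pi - η := fun z hz =>
    (hp₂ z hz).trans_lt (by linarith)
  have hK := hK₁.union hK₂
  have hK₀ : IsCompact ((K₁ ∪ K₂) ∩ {z | MvPolynomial.eval (coords z) p = 0}) :=
    hK.inter_right (isClosed_eq (continuous_eval_coords p) continuous_const)
  let X : Set (ℂ × ℂ) := insert x (K₁ ∪ K₂)
  have hKX : K₁ ∪ K₂ ⊆ X := Set.subset_insert _ _
  have : CompactSpace X := isCompact_iff_compactSpace.1 (hK.insert x)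
  obtain ⟨f, hf⟩ : ∃ f : (polyRestrict X).range.topologicalClosure,
      ∀ y : X, (f : C(X, ℂ)) y = MvPolynomial.eval (coords y) p :=
    ⟨⟨polyRestrict X p, Subalgebra.le_topologicalClosure _ ((polyRestrict X).mem_range_self p)⟩,
      polyRestrict_apply p⟩
  have hfη : ∀ y : X, |arg ((f : C(X, ℂ)) y)| ≠ Real.pi - η := by
    rintro ⟨y, rfl | hy | hy⟩ <;> rw [hf]
    · exact hxη
    · exact abs_arg_ne_of_nonpos (hp₁ y hy) hη₀ hηπ
    · exact (hK₂η y hy).ne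
  have hcover := algebraHull_union_subset (Subalgebra.isClosed_topologicalClosure _) (f := f)
    (S := Subtype.val ⁻¹' K₁) (T := Subtype.val ⁻¹' K₂)
    (hK.isClosed.preimage continuous_subtype_val) hη₀ hηπ hfη
    (fun y hy => (hf y).trans_le (hp₁ y hy)) (fun y hy => by rw [hf]; exact hK₂η y hy)
  simp only [hf] at hcover
  have hmem {L : Set (ℂ × ℂ)} (hL : IsCompact L) (hLX : L ⊆ X) :=
    mem_polyHull2_iff_mem_algebraHull hL hLX ⟨x, Set.mem_insert _ _⟩
  refine (hcover ((hmem hK hKX).1 hx)).imp (Or.imp (hmem hK₁ ?_).2 (hmem hK₂ ?_).2) (hmem hK₀ ?_).2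
  exacts [Set.subset_union_left.trans hKX, Set.subset_union_right.trans hKX,
    Set.inter_subset_left.trans hKX]

/-- A form of Kallin's lemma in which the two closed sectors containing `p '' K₁` and `p '' K₂`
meet only at the origin. -/
theorem PolyConvex2.union {K₁ K₂ : Set (ℂ × ℂ)} (hK₁ : IsCompact K₁) (hK₂ : IsCompact K₂)
    (h₁ : PolyConvex2 K₁) (h₂ : PolyConvex2 K₂) (p : MvPolynomial (Fin 2) ℂ)
    (hp₁ : ∀ z ∈ K₁, MvPolynomial.eval (coords z) p ≤ 0) {ε : ℝ} (hε : 0 < ε)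
    (hp₂ : ∀ z ∈ K₂, |arg (MvPolynomial.eval (coords z) p)| ≤ Real.pi - ε)
    (h₀ : PolyConvex2 ((K₁ ∪ K₂) ∩ {z | MvPolynomial.eval (coords z) p = 0})) :
    PolyConvex2 (K₁ ∪ K₂) := by
  refine Set.Subset.antisymm (fun x hx => ?_) (subset_polyHull2 (hK₁.union hK₂))
  rcases polyHull2_union_subset hK₁ hK₂ p hp₁ hε hp₂ hx with (hx | hx) | hx
  exacts [Or.inl (h₁.subset hx), Or.inr (h₂.subset hx), (h₀.subset hx).1]

lemma notMem_polyHull2_of_eval_pos {K : Set (ℂ × ℂ)} (hK : IsCompact K) {x : ℂ × ℂ}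
    (p : MvPolynomial (Fin 2) ℂ) (hpx : MvPolynomial.eval (coords x) p = 0)
    (hpK : ∀ z ∈ K, 0 < MvPolynomial.eval (coords z) p) : x ∉ polyHull2 K := by
  have hp := continuous_eval_coords p
  obtain ⟨δ, hδ₀, hδ⟩ := hK.exists_forall_le' (continuous_re.comp hp).continuousOn fun z hz =>
    (Complex.lt_def.1 (hpK z hz)).1
  obtain ⟨R, hR⟩ := hK.exists_bound_of_continuousOn hp.continuousOn
  intro hx
  have hle := (mem_polyHull2_iff hK).1 hx (MvPolynomial.C ((max R δ : ℝ) : ℂ) - p) (max R δ - δ)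
    (sub_nonneg.2 (le_max_right _ _)) fun z hz => by
      have hre : MvPolynomial.eval (coords z) p = ((MvPolynomial.eval (coords z) p).re : ℂ) :=
        Complex.ext rfl (Complex.lt_def.1 (hpK z hz)).2.symm
      have hle : (MvPolynomial.eval (coords z) p).re ≤ max R δ :=
        ((re_le_norm _).trans (hR z hz)).trans (le_max_left _ _)
      rw [map_sub, MvPolynomial.eval_C, hre, ← ofReal_sub, norm_real,
        Real.norm_of_nonneg (sub_nonneg.2 hle)]
      exact sub_le_sub_left (hδ z hz) _
  rw [map_sub, MvPolynomial.eval_C, hpx, sub_zero, norm_real,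
    Real.norm_of_nonneg (hδ₀.le.trans (le_max_right _ _))] at hle
  exact (sub_lt_self _ hδ₀).not_ge hle

lemma mem_plane0_iff {z : ℂ × ℂ} : z ∈ plane0 ↔ im ∘ coords z = 0 := by
  constructor
  · rintro ⟨x, y, rfl⟩
    refine funext fun i => ?_
    fin_cases i <;> rfl
  · intro h
    exact ⟨z.1.re, z.2.re,
      Prod.ext (Complex.ext rfl (congrFun h 0)) (Complex.ext rfl (congrFun h 1))⟩

lemma isClosed_plane0 : IsClosed plane0 := by
  have : plane0 = {z | im ∘ coords z = 0} := Set.ext fun _ => mem_plane0_iff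
  rw [this]
  exact isClosed_eq (continuous_comp_coords continuous_im) continuous_const

lemma coords_injective : Function.Injective coords := fun _ _ h =>
  Prod.ext (congrFun h 0) (congrFun h 1)

/-- For real `k` the polynomial `∑ i, (zᵢ - xᵢ) (zᵢ - conj xᵢ)` takes the value `‖k - x‖²`. -/
lemma polyConvex2_of_subset_plane0 {K : Set (ℂ × ℂ)} (hK : IsCompact K) (hK₀ : K ⊆ plane0) :
    PolyConvex2 K := by
  refine Set.Subset.antisymm (fun x hx => ?_) (subset_polyHull2 hK)
  by_contra hxK
  let p : MvPolynomial (Fin 2) ℂ := ∑ i, (MvPolynomial.X i - MvPolynomial.C (coords x i)) *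
    (MvPolynomial.X i - MvPolynomial.C (conj (coords x i)))
  have hp : ∀ z, MvPolynomial.eval (coords z) p =
      ∑ i, (coords z i - coords x i) * (coords z i - conj (coords x i)) := fun z => by
    simp [p]
  refine notMem_polyHull2_of_eval_pos hK p (by simp [hp]) (fun z hz => ?_) hx
  have hreal : ∀ i, conj (coords z i) = coords z i := fun i =>
    conj_eq_iff_im.2 (congrFun (mem_plane0_iff.1 (hK₀ hz)) i)
  have hterm : ∀ i, (coords z i - coords x i) * (coords z i - conj (coords x i)) =
      (normSq (coords z i - coords x i) : ℂ) := fun i => by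
    rw [← mul_conj, map_sub, hreal]
  rw [hp, Finset.sum_congr rfl fun i _ => hterm i, ← ofReal_sum]
  have hne : coords z ≠ coords x := fun h => hxK (coords_injective h ▸ hz)
  obtain ⟨i, hi⟩ := Function.ne_iff.1 hne
  exact zero_lt_real.2 <| Finset.sum_pos' (fun j _ => normSq_nonneg _)
    ⟨i, Finset.mem_univ i, normSq_pos.2 (sub_ne_zero.2 hi)⟩

lemma isCompact_eClosedBall (r : ℝ) : IsCompact (eClosedBall r) := by
  refine Metric.isCompact_of_isClosed_isBounded (isClosed_le (by fun_prop) (by fun_prop)) ?_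
  refine isBounded_iff_forall_norm_le.2 ⟨|r|, fun z (hz : ‖z.1‖ ^ 2 + ‖z.2‖ ^ 2 ≤ r ^ 2) => ?_⟩
  rw [Prod.norm_def, max_le_iff]
  constructor <;> refine le_of_sq_le_sq ?_ (abs_nonneg r) <;> rw [sq_abs]
  · linarith [sq_nonneg ‖z.2‖]
  · linarith [sq_nonneg ‖z.1‖]

lemma eval_smul_of_isHomogeneous {σ R : Type*} [CommSemiring R] {p : MvPolynomial σ R} {n : ℕ}
    (hp : p.IsHomogeneous n) (c : R) (x : σ → R) :
    MvPolynomial.eval (c • x) p = c ^ n * MvPolynomial.eval x p := by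
  rw [MvPolynomial.eval_eq, MvPolynomial.eval_eq, Finset.mul_sum]
  refine Finset.sum_congr rfl fun d hd => ?_
  have hdeg : d.degree = n := by
    rw [Finsupp.degree_eq_weight_one]
    exact hp (MvPolynomial.mem_support_iff.1 hd)
  simp only [Pi.smul_apply, smul_eq_mul, mul_pow]
  rw [Finset.prod_mul_distrib, Finset.prod_pow_eq_pow_sum, ← Finsupp.degree_apply, hdeg]
  ring

lemma coords_smul (t : ℝ) (z : ℂ × ℂ) : coords (t • z) = (t : ℂ) • coords z :=
  funext fun i => by fin_cases i <;> simp [coords]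

lemma eval_coords_zero {p : MvPolynomial (Fin 2) ℂ} {n : ℕ} (hn : n ≠ 0) (hp : p.IsHomogeneous n) :
    MvPolynomial.eval (coords 0) p = 0 := by
  rw [← zero_smul ℝ (0 : ℂ × ℂ), coords_smul, eval_smul_of_isHomogeneous hp, ofReal_zero,
    zero_pow hn, zero_mul]

lemma exists_abs_arg_le_of_isHomogeneous {E : Set (ℂ × ℂ)} (hE : IsClosed E)
    (hcone : ∀ t : ℝ, ∀ z ∈ E, t • z ∈ E) {p : MvPolynomial (Fin 2) ℂ} {n : ℕ} (hn : n ≠ 0)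
    (hp : p.IsHomogeneous n) (hpE : ∀ z ∈ E, z ≠ 0 → MvPolynomial.eval (coords z) p ∈ slitPlane) :
    ∃ ε > 0, ∀ z ∈ E, |arg (MvPolynomial.eval (coords z) p)| ≤ Real.pi - ε := by
  have hslit : ∀ z ∈ E ∩ Metric.sphere 0 1, MvPolynomial.eval (coords z) p ∈ slitPlane :=
    fun z hz => hpE z hz.1 (ne_zero_of_mem_unit_sphere ⟨z, hz.2⟩)
  obtain ⟨ε, hε₀, hε⟩ : ∃ ε > 0, ∀ z ∈ E ∩ Metric.sphere 0 1,
      ε ≤ Real.pi - |arg (MvPolynomial.eval (coords z) p)| := by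
    refine ((isCompact_sphere _ _).inter_left hE).exists_forall_le'
      (continuousOn_const.sub (ContinuousOn.abs fun z hz => ?_)) fun z hz => ?_
    · exact ((continuousAt_arg (hslit z hz)).comp (f := fun z => MvPolynomial.eval (coords z) p)
        (continuous_eval_coords p).continuousAt).continuousWithinAt
    · exact sub_pos.2 (abs_lt.2 ⟨neg_pi_lt_arg _,
        (arg_le_pi _).lt_of_ne (mem_slitPlane_iff_arg.1 (hslit z hz)).1⟩)
  refine ⟨min ε Real.pi, lt_min hε₀ Real.pi_pos, fun z hz => ?_⟩
  rcases eq_or_ne z 0 with rfl | hz₀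
  · rw [eval_coords_zero hn hp, arg_zero, abs_zero]
    exact sub_nonneg.2 (min_le_right _ _)
  have hnorm : 0 < ‖z‖ := norm_pos_iff.2 hz₀
  have hunit : ‖z‖⁻¹ • z ∈ E ∩ Metric.sphere 0 1 :=
    ⟨hcone _ z hz, by rw [mem_sphere_zero_iff_norm, norm_smul, norm_inv, norm_norm,
      inv_mul_cancel₀ hnorm.ne']⟩
  have harg := hε _ hunit
  rw [coords_smul, eval_smul_of_isHomogeneous hp, ← ofReal_pow,
    arg_real_mul _ (pow_pos (inv_pos.2 hnorm) n)] at harg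
  linarith [min_le_left ε Real.pi]

theorem LocPolyConvexAt0.plane0_union {E : Set (ℂ × ℂ)} (hconv : LocPolyConvexAt0 E)
    (hE : IsClosed E) (hcone : ∀ t : ℝ, ∀ z ∈ E, t • z ∈ E) {p : MvPolynomial (Fin 2) ℂ} {n : ℕ}
    (hn : n ≠ 0) (hp : p.IsHomogeneous n)
    (hp₀ : ∀ z ∈ plane0, MvPolynomial.eval (coords z) p ≤ 0)
    (hpE : ∀ z ∈ E, z ≠ 0 → MvPolynomial.eval (coords z) p ∈ slitPlane) :
    LocPolyConvexAt0 (plane0 ∪ E) := by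
  obtain ⟨ε, hε₀, hε⟩ := exists_abs_arg_le_of_isHomogeneous hE hcone hn hp hpE
  obtain ⟨r, hr, hEr⟩ := hconv
  have hK₁ : IsCompact (plane0 ∩ eClosedBall r) :=
    (isCompact_eClosedBall r).inter_left isClosed_plane0
  have hK₂ : IsCompact (E ∩ eClosedBall r) := (isCompact_eClosedBall r).inter_left hE
  refine ⟨r, hr, ?_⟩
  rw [Set.union_inter_distrib_right]
  refine PolyConvex2.union hK₁ hK₂ (polyConvex2_of_subset_plane0 hK₁ Set.inter_subset_left) hEr p
    (fun z hz => hp₀ z hz.1) hε₀ (fun z hz => hε z hz.1) ?_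
  refine polyConvex2_of_subset_plane0 ((hK₁.union hK₂).inter_right
    (isClosed_eq (continuous_eval_coords p) continuous_const)) ?_
  rintro z ⟨⟨hz, -⟩ | ⟨hz, -⟩, hpz⟩
  · exact hz
  · obtain rfl : z = 0 := of_not_not fun hz₀ => slitPlane_ne_zero (hpE z hz hz₀) hpz
    exact ⟨0, 0, rfl⟩

/-! ### Quadratic forms and the planes `(A + iI)ℝ²` -/

lemma mem_planeOf_iff {A : Matrix (Fin 2) (Fin 2) ℝ} {z : ℂ × ℂ} :
    z ∈ planeOf A ↔ re ∘ coords z = A.mulVec (im ∘ coords z) := by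
  constructor
  · rintro ⟨x, y, rfl⟩
    refine funext fun i => ?_
    fin_cases i <;> simp [coords, Matrix.mulVec, dotProduct]
  · intro h
    have h₀ : z.1.re = A 0 0 * z.1.im + A 0 1 * z.2.im := by
      simpa [coords, Matrix.mulVec, dotProduct] using congrFun h 0
    have h₁ : z.2.re = A 1 0 * z.1.im + A 1 1 * z.2.im := by
      simpa [coords, Matrix.mulVec, dotProduct] using congrFun h 1
    exact ⟨z.1.im, z.2.im, Prod.ext (Complex.ext (by simpa using h₀) (by simp))
      (Complex.ext (by simpa using h₁) (by simp))⟩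

lemma isClosed_planeOf (A : Matrix (Fin 2) (Fin 2) ℝ) : IsClosed (planeOf A) := by
  have : planeOf A = {z | re ∘ coords z = A.mulVec (im ∘ coords z)} :=
    Set.ext fun _ => mem_planeOf_iff
  rw [this]
  exact isClosed_eq (continuous_comp_coords continuous_re)
    (continuous_const.matrix_mulVec (continuous_comp_coords continuous_im))

lemma smul_mem_planeOf {A : Matrix (Fin 2) (Fin 2) ℝ} (t : ℝ) {z : ℂ × ℂ} (hz : z ∈ planeOf A) :
    t • z ∈ planeOf A := by
  have hre : re ∘ coords (t • z) = t • re ∘ coords z :=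
    funext fun i => by simp [coords_smul]
  have him : im ∘ coords (t • z) = t • im ∘ coords z :=
    funext fun i => by simp [coords_smul]
  rw [mem_planeOf_iff] at hz ⊢
  rw [hre, him, hz, Matrix.mulVec_smul]

/-- The quadratic form `x ↦ xᵀ S x` of a real matrix `S`, as a polynomial in complex variables. -/
noncomputable def quadraticPoly {ι : Type*} [Fintype ι] (S : Matrix ι ι ℝ) : MvPolynomial ι ℂ :=
  ∑ i, ∑ j, MvPolynomial.C (S i j : ℂ) * MvPolynomial.X i * MvPolynomial.X j

lemma isHomogeneous_quadraticPoly {ι : Type*} [Fintype ι] (S : Matrix ι ι ℝ) :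
    (quadraticPoly S).IsHomogeneous 2 :=
  MvPolynomial.IsHomogeneous.sum _ _ _ fun i _ => MvPolynomial.IsHomogeneous.sum _ _ _ fun j _ =>
    (MvPolynomial.isHomogeneous_C_mul_X _ i).mul (MvPolynomial.isHomogeneous_X _ j)

lemma eval_quadraticPoly {ι : Type*} [Fintype ι] {S : Matrix ι ι ℝ} (hS : S.IsSymm) (x : ι → ℂ) :
    MvPolynomial.eval x (quadraticPoly S) =
      ⟨re ∘ x ⬝ᵥ S.mulVec (re ∘ x) - im ∘ x ⬝ᵥ S.mulVec (im ∘ x),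
        2 * (im ∘ x ⬝ᵥ S.mulVec (re ∘ x))⟩ := by
  have hswap : im ∘ x ⬝ᵥ S.mulVec (re ∘ x) = re ∘ x ⬝ᵥ S.mulVec (im ∘ x) := by
    rw [Matrix.dotProduct_mulVec, ← Matrix.mulVec_transpose, hS.eq, dotProduct_comm]
  have heval : MvPolynomial.eval x (quadraticPoly S) = ∑ i, ∑ j, S i j * x i * x j := by
    simp [quadraticPoly]
  rw [heval]
  apply Complex.ext
  · simp only [re_sum, dotProduct, Matrix.mulVec, Finset.mul_sum, ← Finset.sum_sub_distrib,
      mul_re, mul_im, ofReal_re, ofReal_im, Function.comp_apply]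
    exact Finset.sum_congr rfl fun i _ => Finset.sum_congr rfl fun j _ => by ring
  · rw [two_mul]
    nth_rw 2 [hswap]
    simp only [im_sum, dotProduct, Matrix.mulVec, Finset.mul_sum, ← Finset.sum_add_distrib,
      mul_re, mul_im, ofReal_re, ofReal_im, Function.comp_apply]
    exact Finset.sum_congr rfl fun i _ => Finset.sum_congr rfl fun j _ => by ring

/-- By Cayley–Hamilton, `(tr S) S = S² + (det S) I`. -/
lemma posSemidef_of_isSymm_of_det_nonneg_of_trace_nonneg {S : Matrix (Fin 2) (Fin 2) ℝ}
    (hS : S.IsSymm) (hdet : 0 ≤ S.det) (htr : 0 ≤ S.trace) : S.PosSemidef := by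
  have hS' : S 1 0 = S 0 1 := hS.apply 0 1
  rw [Matrix.det_fin_two, hS'] at hdet
  rw [Matrix.trace_fin_two] at htr
  refine .of_dotProduct_mulVec_nonneg (Matrix.isHermitian_iff_isSymm.2 hS) fun x => ?_
  have hx : star x ⬝ᵥ S.mulVec x =
      S 0 0 * x 0 ^ 2 + 2 * S 0 1 * x 0 * x 1 + S 1 1 * x 1 ^ 2 := by
    simp only [star_trivial, dotProduct, Matrix.mulVec, Fin.sum_univ_two, hS']
    ring
  rw [hx]
  rcases htr.eq_or_lt with htr | htr
  · have h₀ : S 0 0 = 0 := by nlinarith [sq_nonneg (S 0 1), sq_nonneg (S 0 0)]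
    have h₁ : S 1 1 = 0 := by linarith
    have h₂ : S 0 1 = 0 := by nlinarith
    simp [h₀, h₁, h₂]
  · refine (mul_nonneg_iff_of_pos_left htr).1 ?_
    calc 0 ≤ (S 0 0 * x 0 + S 0 1 * x 1) ^ 2 + (S 0 1 * x 0 + S 1 1 * x 1) ^ 2 +
        (S 0 0 * S 1 1 - S 0 1 * S 0 1) * (x 0 ^ 2 + x 1 ^ 2) := by positivity
      _ = _ := by ring

lemma posSemidef_or_neg_posSemidef {S : Matrix (Fin 2) (Fin 2) ℝ} (hS : S.IsSymm)
    (hdet : 0 ≤ S.det) : S.PosSemidef ∨ (-S).PosSemidef := by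
  rcases le_total 0 S.trace with htr | htr
  · exact Or.inl (posSemidef_of_isSymm_of_det_nonneg_of_trace_nonneg hS hdet htr)
  · refine Or.inr (posSemidef_of_isSymm_of_det_nonneg_of_trace_nonneg hS.neg ?_ ?_)
    · simpa [Matrix.det_neg] using hdet
    · simpa [Matrix.trace_neg] using htr

lemma mulVec_eq_zero_of_dotProduct_mulVec_eq_zero {S : Matrix (Fin 2) (Fin 2) ℝ} (hS : S.IsSymm)
    (hdet : 0 ≤ S.det) {x : Fin 2 → ℝ} (hx : x ⬝ᵥ S.mulVec x = 0) : S.mulVec x = 0 := by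
  rcases posSemidef_or_neg_posSemidef hS hdet with h | h
  · exact (h.dotProduct_mulVec_zero_iff x).1 hx
  · refine neg_eq_zero.1 ?_
    rw [← Matrix.neg_mulVec, ← h.dotProduct_mulVec_zero_iff, star_trivial, Matrix.neg_mulVec,
      dotProduct_neg, hx, neg_zero]

lemma eval_neg_quadraticPoly_nonpos {S : Matrix (Fin 2) (Fin 2) ℝ} (hS : S.PosDef) {z : ℂ × ℂ}
    (hz : z ∈ plane0) : MvPolynomial.eval (coords z) (-quadraticPoly S) ≤ 0 := by
  rw [map_neg, eval_quadraticPoly (Matrix.isHermitian_iff_isSymm.1 hS.isHermitian),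
    mem_plane0_iff.1 hz, neg_nonpos, Complex.le_def]
  simpa using hS.posSemidef.dotProduct_mulVec_nonneg (re ∘ coords z)

lemma eval_neg_quadraticPoly_mem_slitPlane {S A : Matrix (Fin 2) (Fin 2) ℝ} (hS : S.PosDef)
    (hSA : (S * A).IsSymm) (hA : 0 ≤ A.det) {z : ℂ × ℂ} (hz : z ∈ planeOf A) (hz₀ : z ≠ 0) :
    MvPolynomial.eval (coords z) (-quadraticPoly S) ∈ slitPlane := by
  set v := im ∘ coords z with hv
  rw [mem_planeOf_iff, ← hv] at hz
  rw [map_neg, eval_quadraticPoly (Matrix.isHermitian_iff_isSymm.1 hS.isHermitian),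
    mem_slitPlane_iff, ← hv, hz, or_iff_not_imp_right]
  simp only [neg_re, neg_im, neg_ne_zero, not_not, mul_eq_zero, two_ne_zero, false_or]
  intro him
  rw [Matrix.mulVec_mulVec] at him
  have hSAv := mulVec_eq_zero_of_dotProduct_mulVec_eq_zero hSA
    (by rw [Matrix.det_mul]; exact mul_nonneg hS.det_pos.le hA) him
  rw [← Matrix.mulVec_mulVec] at hSAv
  have hAv := Matrix.eq_zero_of_mulVec_eq_zero hS.det_pos.ne' hSAv
  have hv₀ : v ≠ 0 := fun h => hz₀ <| coords_injective <| funext fun i =>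
    (Complex.ext (congrFun (hz.trans hAv) i) (congrFun h i)).trans (ite_self _).symm
  rw [hAv, zero_dotProduct, zero_sub, neg_neg]
  exact hS.dotProduct_mulVec_pos hv₀

lemma isSymm_rotation_mul_iff {M : Matrix (Fin 2) (Fin 2) ℝ} :
    (!![0, 1; -1, 0] * M).IsSymm ↔ M.trace = 0 := by
  rw [Matrix.IsSymm.ext_iff, Matrix.trace_fin_two]
  simp only [Matrix.mul_apply, Fin.sum_univ_two, Fin.forall_fin_two]
  simp [neg_eq_iff_add_eq_zero, eq_neg_iff_add_eq_zero, add_comm]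

/-- Up to sign, `S` is `J [A, B]` with `J` the rotation by a right angle. The symmetry claims hold
because the commutator and its products with `A` and `B` have trace zero. -/
lemma exists_posDef_isSymm_mul {A B : Matrix (Fin 2) (Fin 2) ℝ} (h : 0 < (A * B - B * A).det) :
    ∃ S : Matrix (Fin 2) (Fin 2) ℝ, S.PosDef ∧ (S * A).IsSymm ∧ (S * B).IsSymm := by
  let J : Matrix (Fin 2) (Fin 2) ℝ := !![0, 1; -1, 0]
  let S := J * (A * B - B * A)
  have hS : S.IsSymm := isSymm_rotation_mul_iff.2 <| by
    rw [Matrix.trace_sub, Matrix.trace_mul_comm, sub_self]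
  have hSA : (S * A).IsSymm := by
    rw [Matrix.mul_assoc, isSymm_rotation_mul_iff, sub_mul, Matrix.trace_sub,
      Matrix.trace_mul_cycle B, sub_self]
  have hSB : (S * B).IsSymm := by
    rw [Matrix.mul_assoc, isSymm_rotation_mul_iff, sub_mul, Matrix.trace_sub,
      Matrix.trace_mul_cycle A, sub_self]
  have hdet : 0 < S.det := by
    have hJ : J.det = 1 := by simp [J, Matrix.det_fin_two_of]
    rwa [Matrix.det_mul, hJ, one_mul]
  rcases posSemidef_or_neg_posSemidef hS hdet.le with hpos | hneg
  · exact ⟨S, hpos.posDef_iff_det_ne_zero.2 hdet.ne', hSA, hSB⟩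
  · refine ⟨-S, hneg.posDef_iff_det_ne_zero.2 ?_, ?_, ?_⟩
    · simpa [Matrix.det_neg] using hdet.ne'
    · rw [neg_mul]
      exact hSA.neg
    · rw [neg_mul]
      exact hSB.neg

theorem stmt_14_general (A₁ A₂ : Matrix (Fin 2) (Fin 2) ℝ)
    (hpair12 : LocPolyConvexAt0 (planeOf A₁ ∪ planeOf A₂))
    (hdet1 : 0 ≤ A₁.det) (hdet2 : 0 ≤ A₂.det) (hcomm : 0 < (A₁ * A₂ - A₂ * A₁).det) :
    LocPolyConvexAt0 (plane0 ∪ planeOf A₁ ∪ planeOf A₂) := by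
  obtain ⟨S, hS, hSA₁, hSA₂⟩ := exists_posDef_isSymm_mul hcomm
  rw [Set.union_assoc]
  refine hpair12.plane0_union ((isClosed_planeOf A₁).union (isClosed_planeOf A₂)) ?_ two_ne_zero
    (isHomogeneous_quadraticPoly S).neg (fun z => eval_neg_quadraticPoly_nonpos hS) ?_
  · rintro t z (hz | hz)
    exacts [Or.inl (smul_mem_planeOf t hz), Or.inr (smul_mem_planeOf t hz)]
  · rintro z (hz | hz)
    exacts [eval_neg_quadraticPoly_mem_slitPlane hS hSA₁ hdet1 hz,
      eval_neg_quadraticPoly_mem_slitPlane hS hSA₂ hdet2 hz]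

theorem stmt_14 (A₁ A₂ : Matrix (Fin 2) (Fin 2) ℝ)
    (htr0 : TotallyRealSet plane0)
    (htr1 : TotallyRealSet (planeOf A₁)) (htr2 : TotallyRealSet (planeOf A₂))
    (hpair01 : LocPolyConvexAt0 (plane0 ∪ planeOf A₁))
    (hpair02 : LocPolyConvexAt0 (plane0 ∪ planeOf A₂))
    (hpair12 : LocPolyConvexAt0 (planeOf A₁ ∪ planeOf A₂))
    (hdet1 : A₁.det = 0) (hdet2 : 0 ≤ A₂.det)
    (hcomm : 0 < (A₁ * A₂ - A₂ * A₁).det) :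
    LocPolyConvexAt0 (plane0 ∪ planeOf A₁ ∪ planeOf A₂) :=
  stmt_14_general A₁ A₂ hpair12 hdet1.ge hdet2 hcomm
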